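/- Let N ≥ 1, 1 ≤ α ≤ 2, and let u₀ : ℝ^N → ℝ be a bounded nonnegative measurable function that is α-logconcave in ℝ^N. Then for every t > 0, the function e^{tΔ}u₀ (given by convolution with the Gauss kernel) is α-logconcave in ℝ^N. -/

import Mathlib

open MeasureTheory Real

/-- `L_α(s) = -(-log s)^{1/α}` for `s > 0`, and `-∞` for `s ≤ 0`, as an `EReal`-valued
function. -/
noncomputable def Lfun (α : ℝ) (s : ℝ) : EReal :=
  if 0 < s then (((-((-Real.log s) ^ (1 / α))) : ℝ) : EReal) else ⊥

/-- Concavity of an `(ℝ ∪ {-∞})`-valued function on the whole space, with the conventions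
`-∞ + a = -∞` and `-∞ ≥ -∞`. -/
def ERealConcaveOn {E : Type*} [AddCommGroup E] [Module ℝ E] (f : E → EReal) : Prop :=
  ∀ x y : E, ∀ μ : ℝ, 0 ≤ μ → μ ≤ 1 →
    ((1 - μ : ℝ) : EReal) * f x + (μ : EReal) * f y ≤ f ((1 - μ) • x + μ • y)

/-- The Gauss kernel `G(x,t) = (4πt)^{-N/2} exp(-|x|²/(4t))`. -/
noncomputable def gauss (N : ℕ) (x : EuclideanSpace ℝ (Fin N)) (t : ℝ) : ℝ :=
  (4 * Real.pi * t) ^ (-(N : ℝ) / 2) * Real.exp (-‖x‖ ^ 2 / (4 * t))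

/-- The heat semigroup `[e^{tΔ}u₀](x) = ∫ G(x-y,t) u₀(y) dy` on `ℝ^N`. -/
noncomputable def heatSol (N : ℕ) (u₀ : EuclideanSpace ℝ (Fin N) → ℝ) (t : ℝ)
    (x : EuclideanSpace ℝ (Fin N)) : ℝ :=
  ∫ y, gauss N (x - y) t * u₀ y

/-- `u` is `α`-logconcave in `ℝ^N`: for all sufficiently small `κ > 0`, the function
`x ↦ L_α(κ u(x))` is concave as an `(ℝ ∪ {-∞})`-valued function. -/
def AlphaLogConcave {N : ℕ} (α : ℝ) (u : EuclideanSpace ℝ (Fin N) → ℝ) : Prop :=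
  ∃ κ₀ : ℝ, 0 < κ₀ ∧ ∀ κ : ℝ, 0 < κ → κ ≤ κ₀ →
    ERealConcaveOn (fun x => Lfun α (κ * u x))

/-- `F : [0,1] → ℝ ∪ {-∞}` is admissible: strictly increasing and continuous on `(0,1]`,
`F(0) = -∞`, and `F(s) ≠ -∞` for `s ∈ (0,1]`. -/
def Admissible (F : ℝ → EReal) : Prop :=
  StrictMonoOn F (Set.Ioc (0 : ℝ) 1) ∧ ContinuousOn F (Set.Ioc (0 : ℝ) 1) ∧
    F 0 = ⊥ ∧ ∀ s : ℝ, 0 < s → s ≤ 1 → F s ≠ ⊥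

/-- `u` is `F`-concave in `ℝ^N`: for all sufficiently small `κ > 0`, one has
`0 ≤ κ u ≤ 1` and `x ↦ F(κ u(x))` is concave as an `(ℝ ∪ {-∞})`-valued function. -/
def FConcave {N : ℕ} (F : ℝ → EReal) (u : EuclideanSpace ℝ (Fin N) → ℝ) : Prop :=
  ∃ κ₀ : ℝ, 0 < κ₀ ∧ ∀ κ : ℝ, 0 < κ → κ ≤ κ₀ →
    (∀ x, 0 ≤ κ * u x ∧ κ * u x ≤ 1) ∧
    ∀ x y : EuclideanSpace ℝ (Fin N), ∀ μ : ℝ, 0 ≤ μ → μ ≤ 1 →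
      ((1 - μ : ℝ) : EReal) * F (κ * u x) + (μ : EReal) * F (κ * u y) ≤
        F (κ * u ((1 - μ) • x + μ • y))

/-- The zero extension of a function `u` on `Ω` to all of `ℝ^N`. -/
noncomputable def zeroExt {N : ℕ} (Ω : Set (EuclideanSpace ℝ (Fin N)))
    (u : EuclideanSpace ℝ (Fin N) → ℝ) : EuclideanSpace ℝ (Fin N) → ℝ :=
  Ω.indicator u

/-- Concavity of an `(ℝ ∪ {-∞})`-valued function on a convex set `Ω`. -/
def ERealConcaveOnSet {E : Type*} [AddCommGroup E] [Module ℝ E]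
    (Ω : Set E) (f : E → EReal) : Prop :=
  ∀ x ∈ Ω, ∀ y ∈ Ω, ∀ μ : ℝ, 0 ≤ μ → μ ≤ 1 →
    ((1 - μ : ℝ) : EReal) * f x + (μ : EReal) * f y ≤ f ((1 - μ) • x + μ • y)

/-!
For a logconcave `f`, the increasing rearrangement `T` of the standard Gaussian `γ` onto the
normalized measure `f γ` is a contraction. The logarithm of its Monge–Ampère equation writes
`-log ∫ f dγ` as the transport energy `-log f(T) + |z - T|² / 2 + (T' - 1 - log T')` minus the
divergence `z (z - T) - (1 - T')`, which has Gaussian mean zero.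

Let `S`, `T` transport `γ` to the restrictions of an `α`-logconcave function to two parallel lines.
Along the interpolation `(1 - μ) S + μ T`, the roots of orders `α`, `2` and `2` of the three terms
of the energy are at most the same combinations of the roots at `S` and `T`: for the potential by
hypothesis, for the displacement by the triangle inequality, and for the Jacobian term because
`q ↦ √(q - 1 - log q)` is convex on `(0, 1]`, which is where the contraction property enters. For
`α ≤ 2` the same weights, tangent to `((1 - μ) X^(1/α) + μ Y^(1/α))^α`, bound all three terms, and
Jensen's inequality for the change of variables shows that averaging over a Gaussian on a line
preserves `α`-logconcavity. The heat kernel on `ℝ^N` is the convolution of `N` such Gaussians.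
-/

open ProbabilityTheory Set Filter Topology

local notation "γ" => gaussianReal 0 1
local notation "φ" => gaussianPDFReal 0 1

section StandardGaussianDensity

theorem stdGaussianPDF_eq (z : ℝ) : φ z = (√(2 * π))⁻¹ * exp (-z ^ 2 / 2) := by
  simp [gaussianPDFReal]

theorem stdGaussianPDF_pos (z : ℝ) : 0 < φ z := gaussianPDFReal_pos 0 1 z one_ne_zero

theorem log_stdGaussianPDF (z : ℝ) : log (φ z) = log (√(2 * π))⁻¹ - z ^ 2 / 2 := by
  rw [stdGaussianPDF_eq, log_mul (by positivity) (exp_pos _).ne', log_exp]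
  ring

theorem hasDerivAt_stdGaussianPDF (z : ℝ) : HasDerivAt φ (-(z * φ z)) z := by
  have exponent : HasDerivAt (fun z : ℝ => -z ^ 2 / 2) (-z) z :=
    ((hasDerivAt_pow 2 z).neg.div_const 2).congr_deriv (by norm_num; ring)
  rw [funext stdGaussianPDF_eq]
  exact (exponent.exp.const_mul _).congr_deriv (by ring)

theorem continuous_stdGaussianPDF : Continuous φ :=
  continuous_iff_continuousAt.2 fun z => (hasDerivAt_stdGaussianPDF z).continuousAt

theorem stdGaussianPDF_mul_le_mul {a b c d : ℝ} (h : c ^ 2 + d ^ 2 ≤ a ^ 2 + b ^ 2) :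
    φ a * φ b ≤ φ c * φ d := by
  rw [← log_le_log_iff (mul_pos (stdGaussianPDF_pos a) (stdGaussianPDF_pos b))
    (mul_pos (stdGaussianPDF_pos c) (stdGaussianPDF_pos d)),
    log_mul (stdGaussianPDF_pos a).ne' (stdGaussianPDF_pos b).ne',
    log_mul (stdGaussianPDF_pos c).ne' (stdGaussianPDF_pos d).ne']
  simp only [log_stdGaussianPDF]
  linarith

theorem exp_mul_stdGaussianPDF (s x₀ x : ℝ) :
    exp (-s * (x - x₀)) * φ x = exp (s * x₀ + s ^ 2 / 2) * φ (x + s) := by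
  have exponents : exp (-s * (x - x₀)) * exp (-x ^ 2 / 2) =
      exp (s * x₀ + s ^ 2 / 2) * exp (-(x + s) ^ 2 / 2) := by
    rw [← exp_add, ← exp_add]
    ring_nf
  rw [stdGaussianPDF_eq, stdGaussianPDF_eq]
  linear_combination (√(2 * π))⁻¹ * exponents

theorem integrable_stdGaussian_iff {f : ℝ → ℝ} :
    Integrable f γ ↔ Integrable fun x => f x * φ x := by
  rw [gaussianReal_of_var_ne_zero 0 one_ne_zero, integrable_withDensity_iff
    (measurable_gaussianPDF 0 1) (ae_of_all _ fun _ => gaussianPDF_lt_top)]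
  simp only [toReal_gaussianPDF]

theorem integral_stdGaussian (f : ℝ → ℝ) : ∫ x, f x ∂γ = ∫ x, f x * φ x := by
  simp_rw [integral_gaussianReal_eq_integral_smul one_ne_zero, smul_eq_mul, mul_comm]

end StandardGaussianDensity

section HalfLineIntegrals

theorem setIntegral_Iic_zero_const_add (g : ℝ → ℝ) (x : ℝ) :
    ∫ r in Iic 0, g (x + r) = ∫ r in Iic x, g r := by
  simpa using (measurePreserving_add_left volume x).setIntegral_preimage_emb
    (measurableEmbedding_addLeft x) g (Iic x)

theorem setIntegral_Ioi_zero_const_add (g : ℝ → ℝ) (x : ℝ) :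
    ∫ r in Ioi 0, g (x + r) = ∫ r in Ioi x, g r := by
  simpa using (measurePreserving_add_left volume x).setIntegral_preimage_emb
    (measurableEmbedding_addLeft x) g (Ioi x)

theorem setIntegral_pos_of_pos {g : ℝ → ℝ} {S : Set ℝ} (hg : Integrable g) (pos : ∀ x, 0 < g x)
    (hS : volume S ≠ 0) : 0 < ∫ x in S, g x := by
  rw [setIntegral_pos_iff_support_of_nonneg_ae (ae_of_all _ fun x => (pos x).le) hg.integrableOn,
    show Function.support g = univ from Set.ext fun x => by simp [(pos x).ne'], univ_inter]
  exact pos_iff_ne_zero.2 hS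

theorem hasDerivAt_integral_Iic {g : ℝ → ℝ} (hg : Integrable g) {x : ℝ}
    (hx : ContinuousAt g x) : HasDerivAt (fun x => ∫ r in Iic x, g r) (g x) x := by
  have primitive := intervalIntegral.integral_hasDerivAt_right
    (hg.intervalIntegrable (a := 0) (b := x)) hg.1.stronglyMeasurableAtFilter hx
  refine (primitive.add_const (∫ r in Iic 0, g r)).congr_of_eventuallyEq (.of_forall fun y => ?_)
  simp only [← intervalIntegral.integral_Iic_sub_Iic hg.integrableOn hg.integrableOn,
    sub_add_cancel]

theorem continuous_integral_Iic {g : ℝ → ℝ} (hg : Integrable g) :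
    Continuous fun x => ∫ r in Iic x, g r := by
  have primitive := (intervalIntegral.continuous_primitive
    (fun a b => hg.intervalIntegrable (a := a) (b := b)) 0).add
    (continuous_const (y := ∫ r in Iic 0, g r))
  refine primitive.congr fun y => ?_
  simp only [Pi.add_apply, ← intervalIntegral.integral_Iic_sub_Iic hg.integrableOn hg.integrableOn,
    sub_add_cancel]

end HalfLineIntegrals

section ContractionEstimate

/-- With `S` a half-line starting at `0`, this is the monotonicity of the Gaussian inverse Mills
ratio. -/
theorem stdGaussianPDF_mul_setIntegral_le {y z : ℝ} {S : Set ℝ} (hS : MeasurableSet S)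
    (sign : ∀ r ∈ S, 0 ≤ r * (y - z)) :
    φ z * ∫ r in S, φ (y + r) ≤ φ y * ∫ r in S, φ (z + r) := by
  have shifted (a : ℝ) : Integrable fun r => φ (a + r) :=
    (integrable_gaussianPDFReal 0 1).comp_add_left a
  rw [← integral_const_mul, ← integral_const_mul]
  refine setIntegral_mono_on ((shifted y).const_mul _).integrableOn
    ((shifted z).const_mul _).integrableOn hS fun r hr => stdGaussianPDF_mul_le_mul ?_
  linarith [sign r hr]

/-- The tilted Gaussian density `x ↦ f x₀ * exp (-s * (x - x₀)) * φ x` is a multiple of the shifted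
density `φ (x + s)`, so its tails compare with those of `φ` by the Mills ratio. -/
theorem mul_stdGaussianPDF_le_of_setIntegral_eq {f : ℝ → ℝ} {A x₀ s z : ℝ} {S : Set ℝ}
    (hf : Integrable fun x => f x * φ x) (tilt : ∀ x, f x ≤ f x₀ * exp (-s * (x - x₀)))
    (hS : MeasurableSet S) (hS' : volume S ≠ 0) (sign : ∀ r ∈ S, 0 ≤ r * (x₀ + s - z))
    (hA : 0 ≤ A) (tails : ∫ r in S, f (x₀ + r) * φ (x₀ + r) = A * ∫ r in S, φ (z + r)) :
    A * φ z ≤ f x₀ * φ x₀ := by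
  have shifted : Integrable fun r => φ (x₀ + s + r) :=
    (integrable_gaussianPDFReal 0 1).comp_add_left _
  set k := f x₀ * exp (s * x₀ + s ^ 2 / 2)
  have tilted (x : ℝ) : f x₀ * exp (-s * (x - x₀)) * φ x = k * φ (x + s) := by
    rw [mul_assoc, exp_mul_stdGaussianPDF, ← mul_assoc]
  have dominated (r : ℝ) : f (x₀ + r) * φ (x₀ + r) ≤ k * φ (x₀ + s + r) := by
    rw [add_right_comm, ← tilted]
    exact mul_le_mul_of_nonneg_right (tilt _) (stdGaussianPDF_pos _).le
  refine le_of_mul_le_mul_right ?_ (setIntegral_pos_of_pos shifted (fun _ => stdGaussianPDF_pos _)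
    hS')
  calc A * φ z * ∫ r in S, φ (x₀ + s + r)
      = A * (φ z * ∫ r in S, φ (x₀ + s + r)) := by ring
    _ ≤ A * (φ (x₀ + s) * ∫ r in S, φ (z + r)) := by
        gcongr A * ?_
        exact stdGaussianPDF_mul_setIntegral_le hS sign
    _ = φ (x₀ + s) * ∫ r in S, f (x₀ + r) * φ (x₀ + r) := by rw [tails]; ring
    _ ≤ φ (x₀ + s) * ∫ r in S, k * φ (x₀ + s + r) := by
        have := (stdGaussianPDF_pos (x₀ + s)).le
        gcongr φ (x₀ + s) * ?_
        exact setIntegral_mono (hf.comp_add_left x₀).integrableOn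
          (shifted.const_mul k).integrableOn dominated
    _ = f x₀ * φ x₀ * ∫ r in S, φ (x₀ + s + r) := by
        have at_x₀ := tilted x₀
        simp only [sub_self, mul_zero, exp_zero, mul_one] at at_x₀
        rw [integral_const_mul, at_x₀]
        ring

/-- The derivative `A φ(z) / (f(x₀) φ(x₀))` of the increasing rearrangement is at most `1`. -/
theorem mul_stdGaussianPDF_le_of_integral_Iic_eq {f : ℝ → ℝ} {x₀ s z : ℝ}
    (hf : Integrable fun x => f x * φ x) (nonneg : ∀ x, 0 ≤ f x)
    (tilt : ∀ x, f x ≤ f x₀ * exp (-s * (x - x₀)))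
    (mass : ∫ x in Iic x₀, f x * φ x = (∫ x, f x * φ x) * ∫ x in Iic z, φ x) :
    (∫ x, f x * φ x) * φ z ≤ f x₀ * φ x₀ := by
  have total : 0 ≤ ∫ x, f x * φ x :=
    integral_nonneg fun x => mul_nonneg (nonneg x) (stdGaussianPDF_pos x).le
  rcases le_total (x₀ + s) z with h | h
  · refine mul_stdGaussianPDF_le_of_setIntegral_eq hf tilt measurableSet_Iic
      (by simp) (fun r hr => mul_nonneg_of_nonpos_of_nonpos hr (sub_nonpos.2 h)) total ?_
    rw [setIntegral_Iic_zero_const_add (fun x => f x * φ x), setIntegral_Iic_zero_const_add φ, mass]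
  · refine mul_stdGaussianPDF_le_of_setIntegral_eq hf tilt measurableSet_Ioi
      (by simp) (fun r hr => mul_nonneg (le_of_lt hr) (sub_nonneg.2 h)) total ?_
    have hφ := integrable_gaussianPDFReal 0 1
    have complement_f := intervalIntegral.integral_Iic_add_Ioi (b := x₀) hf.integrableOn
      hf.integrableOn
    have complement_φ := intervalIntegral.integral_Iic_add_Ioi (b := z) hφ.integrableOn
      hφ.integrableOn
    rw [integral_gaussianPDFReal_eq_one 0 one_ne_zero] at complement_φ
    rw [setIntegral_Ioi_zero_const_add (fun x => f x * φ x), setIntegral_Ioi_zero_const_add φ]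
    linear_combination complement_f - mass - (∫ x, f x * φ x) * complement_φ

end ContractionEstimate

section Quantile

variable {ρ : ℝ → ℝ}

theorem pos_of_mem_interior {x : ℝ} (hx : x ∈ interior {x | 0 < ρ x}) : 0 < ρ x :=
  interior_subset (s := {x | 0 < ρ x}) hx

theorem mem_interior_of_integral_Iic_mem_Ioo (hρ : Integrable ρ) (nonneg : ∀ x, 0 ≤ ρ x)
    (convex : Convex ℝ {x | 0 < ρ x}) {x : ℝ} (hx : ∫ r in Iic x, ρ r ∈ Ioo 0 (∫ r, ρ r)) :
    x ∈ interior {x | 0 < ρ x} := by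
  have left : ∃ a < x, 0 < ρ a := by
    by_contra! vanishes
    refine hx.1.ne' ?_
    rw [integral_Iic_eq_integral_Iio]
    exact setIntegral_eq_zero_of_forall_eq_zero fun r hr => (vanishes r hr).antisymm (nonneg r)
  have right : ∃ b > x, 0 < ρ b := by
    by_contra! vanishes
    refine hx.2.ne ?_
    rw [← intervalIntegral.integral_Iic_add_Ioi (b := x) hρ.integrableOn hρ.integrableOn,
      setIntegral_eq_zero_of_forall_eq_zero (t := Ioi x)
        fun r hr => (vanishes r hr).antisymm (nonneg r), add_zero]
  obtain ⟨a, hax, ha⟩ := left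
  obtain ⟨b, hxb, hb⟩ := right
  exact mem_interior.2 ⟨Ioo a b, fun w hw => convex.ordConnected.out ha hb ⟨hw.1.le, hw.2.le⟩,
    isOpen_Ioo, hax, hxb⟩

theorem strictMonoOn_integral_Iic (hρ : Integrable ρ) (convex : Convex ℝ {x | 0 < ρ x})
    (cont : ContinuousOn ρ (interior {x | 0 < ρ x})) :
    StrictMonoOn (fun x => ∫ r in Iic x, ρ r) (interior {x | 0 < ρ x}) := by
  refine strictMonoOn_of_deriv_pos convex.interior (continuous_integral_Iic hρ).continuousOn
    fun x hx => ?_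
  rw [interior_interior] at hx
  rw [(hasDerivAt_integral_Iic hρ (cont.continuousAt (isOpen_interior.mem_nhds hx))).deriv]
  exact pos_of_mem_interior hx

theorem integral_Iic_mem_Ioo (hρ : Integrable ρ) (nonneg : ∀ x, 0 ≤ ρ x)
    (convex : Convex ℝ {x | 0 < ρ x}) (cont : ContinuousOn ρ (interior {x | 0 < ρ x})) {x : ℝ}
    (hx : x ∈ interior {x | 0 < ρ x}) : ∫ r in Iic x, ρ r ∈ Ioo 0 (∫ r, ρ r) := by
  have strict := strictMonoOn_integral_Iic hρ convex cont
  obtain ⟨a, hax, ha⟩ := exists_Ioc_subset_of_mem_nhds (isOpen_interior.mem_nhds hx)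
    (exists_lt x)
  obtain ⟨b, hxb, hb⟩ := exists_Ico_subset_of_mem_nhds (isOpen_interior.mem_nhds hx)
    (exists_gt x)
  obtain ⟨a', ha'⟩ := exists_between hax
  obtain ⟨b', hb'⟩ := exists_between hxb
  constructor
  · exact (setIntegral_nonneg measurableSet_Iic fun r _ => nonneg r).trans_lt
      (strict (ha ⟨ha'.1, ha'.2.le⟩) hx ha'.2)
  · exact (strict hx (hb ⟨hb'.1.le, hb'.2⟩) hb'.1).trans_le
      (setIntegral_le_integral hρ (ae_of_all _ nonneg))

theorem exists_integral_Iic_eq (hρ : Integrable ρ) {y : ℝ} (hy : y ∈ Ioo 0 (∫ r, ρ r)) :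
    ∃ x, ∫ r in Iic x, ρ r = y := by
  have at_top : Tendsto (fun x => ∫ r in Iic x, ρ r) atTop (𝓝 (∫ r, ρ r)) :=
    (aecover_Iic tendsto_id).integral_tendsto_of_countably_generated hρ
  obtain ⟨a, ha⟩ :=
    ((tendsto_integral_Iic_zero (f := ρ) tendsto_id).eventually_lt_const hy.1).exists
  obtain ⟨b, hb⟩ := (at_top.eventually_const_lt hy.2).exists
  exact mem_range_of_exists_le_of_exists_ge (continuous_integral_Iic hρ) ⟨a, ha.le⟩ ⟨b, hb.le⟩

theorem exists_quantile (hρ : Integrable ρ) (nonneg : ∀ x, 0 ≤ ρ x)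
    (convex : Convex ℝ {x | 0 < ρ x}) (cont : ContinuousOn ρ (interior {x | 0 < ρ x})) :
    ∃ Q : ℝ → ℝ, ∀ y ∈ Ioo 0 (∫ r, ρ r), Q y ∈ interior {x | 0 < ρ x} ∧
      ∫ r in Iic (Q y), ρ r = y ∧ HasDerivAt Q (ρ (Q y))⁻¹ y := by
  have strict := strictMonoOn_integral_Iic hρ convex cont
  choose! Q hQ using fun y => exists_integral_Iic_eq (y := y) hρ
  have mem_interior y (hy : y ∈ Ioo 0 (∫ r, ρ r)) : Q y ∈ interior {x | 0 < ρ x} :=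
    mem_interior_of_integral_Iic_mem_Ioo hρ nonneg convex ((hQ y hy).symm ▸ hy)
  have mono : StrictMonoOn Q (Ioo 0 (∫ r, ρ r)) := fun a ha b hb hab => by
    rwa [← strict.lt_iff_lt (mem_interior a ha) (mem_interior b hb), hQ a ha, hQ b hb]
  have image : interior {x | 0 < ρ x} ⊆ Q '' Ioo 0 (∫ r, ρ r) := fun x hx =>
    have hGx := integral_Iic_mem_Ioo hρ nonneg convex cont hx
    ⟨_, hGx, strict.injOn (mem_interior _ hGx) hx (hQ _ hGx)⟩
  refine ⟨Q, fun y hy => ⟨mem_interior y hy, hQ y hy, ?_⟩⟩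
  have hy_nhds := isOpen_Ioo.mem_nhds hy
  have hQy_nhds := isOpen_interior.mem_nhds (mem_interior y hy)
  exact HasDerivAt.of_local_left_inverse
    (mono.continuousAt_of_image_mem_nhds hy_nhds (mem_of_superset hQy_nhds image))
    (hasDerivAt_integral_Iic hρ (cont.continuousAt hQy_nhds))
    (pos_of_mem_interior (mem_interior y hy)).ne'
    (mem_of_superset hy_nhds hQ)

end Quantile

section Transport

theorem exists_supporting_line {V : ℝ → ℝ} {D : Set ℝ} (hV : ConvexOn ℝ D V) {x₀ : ℝ}
    (hx₀ : x₀ ∈ interior D) : ∃ s : ℝ, ∀ x ∈ D, V x₀ + s * (x - x₀) ≤ V x := by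
  refine ⟨derivWithin V (Ioi x₀) x₀, fun x hx => ?_⟩
  rcases lt_trichotomy x x₀ with h | rfl | h
  · have slope_le := (hV.slope_le_leftDeriv_of_mem_interior hx hx₀ h).trans
      (hV.leftDeriv_le_rightDeriv_of_mem_interior hx₀)
    rw [slope_def_field, div_le_iff₀ (by linarith)] at slope_le
    linarith
  · simp
  · have le_slope := hV.rightDeriv_le_slope_of_mem_interior hx₀ hx h
    rw [slope_def_field, le_div_iff₀ (by linarith)] at le_slope
    linarith

variable {f : ℝ → ℝ}

theorem exists_le_mul_exp (nonneg : ∀ x, 0 ≤ f x)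
    (hf : ConvexOn ℝ {x | 0 < f x} fun x => -log (f x)) {x₀ : ℝ}
    (hx₀ : x₀ ∈ interior {x | 0 < f x}) :
    ∃ s : ℝ, ∀ x, f x ≤ f x₀ * exp (-s * (x - x₀)) := by
  obtain ⟨s, hs⟩ := exists_supporting_line hf hx₀
  have pos := pos_of_mem_interior hx₀
  refine ⟨s, fun x => ?_⟩
  rcases (nonneg x).eq_or_lt with h | h
  · rw [← h]
    positivity
  · rw [← log_le_log_iff h (by positivity), log_mul pos.ne' (exp_pos _).ne', log_exp]
    linarith [hs x h]

theorem continuousOn_interior_of_neg_log_convex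
    (hf : ConvexOn ℝ {x | 0 < f x} fun x => -log (f x)) :
    ContinuousOn f (interior {x | 0 < f x}) := by
  refine hf.continuousOn_interior.neg.rexp.congr fun x hx => ?_
  simp only [Pi.neg_apply, neg_neg, exp_log (pos_of_mem_interior hx)]

/-- `T` is the increasing transport of the standard Gaussian measure `γ` to `f γ / ∫ f dγ`, and it
is a contraction. `T'` is its derivative, and `monge_ampere` is the change of variables formula for
the densities, cleared of denominators. -/
structure IsContractiveTransport (f T T' : ℝ → ℝ) : Prop where
  hasDerivAt (z : ℝ) : HasDerivAt T (T' z) z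
  deriv_pos (z : ℝ) : 0 < T' z
  deriv_le_one (z : ℝ) : T' z ≤ 1
  map_pos (z : ℝ) : 0 < f (T z)
  monge_ampere (z : ℝ) : f (T z) * φ (T z) * T' z = (∫ x, f x ∂γ) * φ z

theorem exists_isContractiveTransport (hfγ : Integrable f γ) (nonneg : ∀ x, 0 ≤ f x)
    (hf : ConvexOn ℝ {x | 0 < f x} fun x => -log (f x)) (mass_pos : 0 < ∫ x, f x ∂γ) :
    ∃ T T', IsContractiveTransport f T T' := by
  have hρ := integrable_stdGaussian_iff.1 hfγ
  have hφ := integrable_gaussianPDFReal 0 1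
  have mass := integral_stdGaussian f
  have support : {x | 0 < f x * φ x} = {x | 0 < f x} :=
    Set.ext fun x => mul_pos_iff_of_pos_right (stdGaussianPDF_pos x)
  obtain ⟨Q, hQ⟩ := exists_quantile hρ (fun x => mul_nonneg (nonneg x) (stdGaussianPDF_pos x).le)
    (support ▸ hf.1) (support ▸ (continuousOn_interior_of_neg_log_convex hf).mul
      continuous_stdGaussianPDF.continuousOn)
  rw [support, ← mass] at hQ
  set A := ∫ x, f x ∂γ
  set Φ : ℝ → ℝ := fun z => ∫ x in Iic z, φ x
  have hΦ (z : ℝ) : A * Φ z ∈ Ioo 0 A := by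
    have bounds : Φ z ∈ Ioo 0 1 := by
      rw [← integral_gaussianPDFReal_eq_one 0 one_ne_zero]
      have full : {x | 0 < φ x} = univ := eq_univ_of_forall stdGaussianPDF_pos
      exact integral_Iic_mem_Ioo hφ (fun x => (stdGaussianPDF_pos x).le) (full ▸ convex_univ)
        continuous_stdGaussianPDF.continuousOn (by simp [full])
    exact ⟨mul_pos mass_pos bounds.1, mul_lt_of_lt_one_right mass_pos bounds.2⟩
  have hT (z : ℝ) := hQ _ (hΦ z)
  have pos (z : ℝ) : 0 < f (Q (A * Φ z)) := pos_of_mem_interior (hT z).1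
  have density_pos (z : ℝ) := mul_pos (pos z) (stdGaussianPDF_pos (Q (A * Φ z)))
  refine ⟨fun z => Q (A * Φ z), fun z => (f (Q (A * Φ z)) * φ (Q (A * Φ z)))⁻¹ * (A * φ z),
    fun z => ?_, fun z => ?_, fun z => ?_, pos, fun z => ?_⟩
  · exact (hT z).2.2.comp z ((hasDerivAt_integral_Iic hφ
      continuous_stdGaussianPDF.continuousAt).const_mul A)
  · exact mul_pos (inv_pos.2 (density_pos z)) (mul_pos mass_pos (stdGaussianPDF_pos z))
  · obtain ⟨s, hs⟩ := exists_le_mul_exp nonneg hf (hT z).1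
    have bound := mul_stdGaussianPDF_le_of_integral_Iic_eq (z := z) hρ nonneg hs
      (by rw [(hT z).2.1, mass])
    rw [← mass] at bound
    exact inv_mul_le_one_of_le₀ bound (density_pos z).le
  · rw [mul_inv_cancel_left₀ (density_pos z).ne']

end Transport

section IntegrationByParts

theorem integrable_and_integral_mul_sub_deriv_eq_zero {w w' : ℝ → ℝ} {C : ℝ}
    (deriv : ∀ z, HasDerivAt w (w' z) z) (bound : ∀ z, |w' z| ≤ C) :
    Integrable (fun z => z * w z - w' z) γ ∧ ∫ z, (z * w z - w' z) ∂γ = 0 := by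
  have cont : Continuous w := continuous_iff_continuousAt.2 fun z => (deriv z).continuousAt
  have meas : Measurable w' := by
    rw [show w' = _root_.deriv w from funext fun z => (deriv z).deriv.symm]
    exact measurable_deriv w
  have growth (z : ℝ) : |w z| ≤ |w 0| + C * |z| := by
    have lipschitz := convex_univ.norm_image_sub_le_of_norm_hasDerivWithin_le
      (fun z _ => (deriv z).hasDerivWithinAt) (fun z _ => bound z) (mem_univ 0) (mem_univ z)
    simp only [norm_eq_abs, sub_zero] at lipschitz
    linarith [abs_sub_abs_le_abs_sub (w z) (w 0)]
  have id_memLp : MemLp id 2 γ := memLp_id_gaussianReal 2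
  have w_memLp : MemLp w 2 γ :=
    ((memLp_const |w 0|).add (id_memLp.norm.const_mul C)).mono' cont.aestronglyMeasurable
      (ae_of_all _ growth)
  have w'_integrable : Integrable w' γ :=
    (integrable_const C).mono' meas.aestronglyMeasurable (ae_of_all _ bound)
  have integrable : Integrable (fun z => z * w z - w' z) γ :=
    (id_memLp.integrable_mul w_memLp).sub w'_integrable
  refine ⟨integrable, ?_⟩
  have vanishes := integral_eq_zero_of_hasDerivAt_of_integrable
    (f' := fun z => -((z * w z - w' z) * φ z))
    (fun z => ((deriv z).mul (hasDerivAt_stdGaussianPDF z)).congr_deriv (by ring))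
    (integrable_stdGaussian_iff.1 integrable).neg
    (integrable_stdGaussian_iff.1 (w_memLp.integrable one_le_two))
  rwa [integral_neg, neg_eq_zero, ← integral_stdGaussian] at vanishes

/-- The divergence, adjoint to the derivative in `L²(γ)`, of the displacement `z - T z` of a map `T`
with derivative `T'`. -/
def displacementDivergence (T T' : ℝ → ℝ) (z : ℝ) : ℝ := z * (z - T z) - (1 - T' z)

theorem displacementDivergence_interpolation (S S' T T' : ℝ → ℝ) (μ z : ℝ) :
    displacementDivergence (fun z => (1 - μ) * S z + μ * T z)
        (fun z => (1 - μ) * S' z + μ * T' z) z =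
      (1 - μ) * displacementDivergence S S' z + μ * displacementDivergence T T' z := by
  simp only [displacementDivergence]
  ring

theorem IsContractiveTransport.integrable_and_integral_displacementDivergence_eq_zero
    {f T T' : ℝ → ℝ} (hT : IsContractiveTransport f T T') :
    Integrable (displacementDivergence T T') γ ∧ ∫ z, displacementDivergence T T' z ∂γ = 0 :=
  integrable_and_integral_mul_sub_deriv_eq_zero (w := fun z => z - T z) (C := 1)
    (fun z => (hasDerivAt_id' z).sub (hT.hasDerivAt z))
    fun z => abs_le.2 ⟨by linarith [hT.deriv_le_one z], by linarith [hT.deriv_pos z]⟩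

end IntegrationByParts

section LogDeficit

/-- The deficit in `log q ≤ q - 1`. At `q = T' z` it is the contribution of the Jacobian of a
transport map `T` to the relative entropy. -/
noncomputable def logDeficit (q : ℝ) : ℝ := q - 1 - log q

theorem sq_div_two_le_logDeficit {q : ℝ} (hq : q ∈ Ioc 0 1) : (1 - q) ^ 2 / 2 ≤ logDeficit q := by
  have series := hasSum_pow_div_log_of_abs_lt_one (x := 1 - q)
    (abs_lt.2 ⟨by linarith [hq.2], by linarith [hq.1]⟩)
  have partial_sum := sum_le_hasSum (Finset.range 2)
    (fun n _ => div_nonneg (pow_nonneg (sub_nonneg.2 hq.2) _) (by positivity)) series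
  simp only [Finset.sum_range_succ, Finset.sum_range_zero, sub_sub_cancel] at partial_sum
  norm_num at partial_sum
  rw [logDeficit]
  linarith

theorem logDeficit_nonneg {q : ℝ} (hq : q ∈ Ioc 0 1) : 0 ≤ logDeficit q :=
  (by positivity : 0 ≤ (1 - q) ^ 2 / 2).trans (sq_div_two_le_logDeficit hq)

theorem hasDerivAt_logDeficit {q : ℝ} (hq : q ≠ 0) : HasDerivAt logDeficit (1 - q⁻¹) q :=
  ((hasDerivAt_id' q).sub_const 1).sub (hasDerivAt_log hq)

theorem convexOn_sqrt_of_sq_deriv_le {F F' F'' : ℝ → ℝ} {D : Set ℝ} (hD : Convex ℝ D)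
    (cont : ContinuousOn F D) (pos : ∀ x ∈ interior D, 0 < F x)
    (deriv : ∀ x ∈ interior D, HasDerivAt F (F' x) x)
    (deriv2 : ∀ x ∈ interior D, HasDerivAt F' (F'' x) x)
    (bound : ∀ x ∈ interior D, F' x ^ 2 ≤ 2 * F x * F'' x) : ConvexOn ℝ D fun x => √(F x) := by
  have sqrt_deriv x (hx : x ∈ interior D) := (deriv x hx).sqrt (pos x hx).ne'
  have sqrt_pos x (hx : x ∈ interior D) := Real.sqrt_pos.2 (pos x hx)
  refine convexOn_of_hasDerivWithinAt2_nonneg hD cont.sqrt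
    (fun x hx => (sqrt_deriv x hx).hasDerivWithinAt)
    (fun x hx => ((deriv2 x hx).div ((sqrt_deriv x hx).const_mul 2)
      (mul_pos two_pos (sqrt_pos x hx)).ne').hasDerivWithinAt)
    fun x hx => div_nonneg ?_ (sq_nonneg _)
  have numerator : F'' x * (2 * √(F x)) - F' x * (2 * (F' x / (2 * √(F x)))) =
      (2 * F x * F'' x - F' x ^ 2) / √(F x) := by
    have := sqrt_pos x hx
    field_simp
    rw [sq_sqrt (pos x hx).le]
  rw [numerator]
  exact div_nonneg (sub_nonneg.2 (bound x hx)) (sqrt_pos x hx).le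

theorem convexOn_sqrt_logDeficit : ConvexOn ℝ (Ioc 0 1) fun q => √(logDeficit q) := by
  have ne_zero {q : ℝ} (hq : q ∈ Ioc 0 1) : q ≠ 0 := hq.1.ne'
  refine convexOn_sqrt_of_sq_deriv_le (F' := fun q => 1 - q⁻¹) (F'' := fun q => (q ^ 2)⁻¹)
    (convex_Ioc 0 1)
    (fun q hq => (hasDerivAt_logDeficit (ne_zero hq)).continuousAt.continuousWithinAt) ?_
    (fun q hq => hasDerivAt_logDeficit (ne_zero (interior_subset hq)))
    (fun q hq => ((hasDerivAt_inv (ne_zero (interior_subset hq))).const_sub 1).congr_deriv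
      (neg_neg _)) ?_ <;> rw [interior_Ioc] <;> intro q hq
  · have : 0 < 1 - q := sub_pos.2 hq.2
    exact (by positivity : 0 < (1 - q) ^ 2 / 2).trans_le
      (sq_div_two_le_logDeficit (Ioo_subset_Ioc_self hq))
  · have hq0 : 0 < q := hq.1
    calc (1 - q⁻¹) ^ 2 = (1 - q) ^ 2 / 2 * (2 * (q ^ 2)⁻¹) := by field_simp; ring
      _ ≤ logDeficit q * (2 * (q ^ 2)⁻¹) := by
          gcongr
          exact sq_div_two_le_logDeficit (Ioo_subset_Ioc_self hq)
      _ = 2 * logDeficit q * (q ^ 2)⁻¹ := by ring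

end LogDeficit

section TangentWeights

/-- `P` and `Q` are the partial derivatives at `(a ^ α, b ^ α)` of the concave, positively
homogeneous function `(X, Y) ↦ ((1 - μ) * X ^ (1 / α) + μ * Y ^ (1 / α)) ^ α`. -/
theorem exists_tangent_weights {α μ a b : ℝ} (hα : 1 ≤ α) (hμ₀ : 0 < μ) (hμ₁ : μ < 1)
    (ha : 0 < a) (hb : 0 < b) :
    ∃ P Q : ℝ, 0 ≤ P ∧ 0 ≤ Q ∧ P * a ^ α + Q * b ^ α = ((1 - μ) * a + μ * b) ^ α ∧
      ∀ β, α ≤ β → ∀ k x y : ℝ, 0 ≤ k → 0 ≤ x → 0 ≤ y → k ≤ (1 - μ) * x + μ * y →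
        k ^ β ≤ P * x ^ β + Q * y ^ β := by
  have hμ' : 0 < 1 - μ := sub_pos.2 hμ₁
  have hα₀ : 0 < α := one_pos.trans_le hα
  set c := (1 - μ) * a + μ * b
  have hc : 0 < c := by positivity
  have barycentric : (1 - μ) * a / c + μ * b / c = 1 := by rw [← add_div, div_self hc.ne']
  have jensen : ∀ k x y : ℝ, 0 ≤ k → 0 ≤ x → 0 ≤ y → k ≤ (1 - μ) * x + μ * y →
      k ^ α ≤ (1 - μ) * a / c * (c / a) ^ α * x ^ α + μ * b / c * (c / b) ^ α * y ^ α := by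
    intro k x y hk hx hy hkxy
    have convex := (convexOn_rpow hα).2 (x := c / a * x) (y := c / b * y)
      (mem_Ici.2 (by positivity)) (mem_Ici.2 (by positivity))
      (show 0 ≤ (1 - μ) * a / c by positivity) (show 0 ≤ μ * b / c by positivity) barycentric
    simp only [smul_eq_mul] at convex
    rw [mul_rpow (by positivity) hx, mul_rpow (by positivity) hy] at convex
    refine (rpow_le_rpow hk ?_ hα₀.le).trans (convex.trans_eq (by ring))
    convert hkxy using 1
    field_simp
  refine ⟨(1 - μ) * a / c * (c / a) ^ α, μ * b / c * (c / b) ^ α, by positivity, by positivity,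
    ?_, fun β hβ k x y hk hx hy hkxy => ?_⟩
  · rw [mul_assoc, mul_assoc, ← mul_rpow (by positivity) ha.le, ← mul_rpow (by positivity) hb.le,
      div_mul_cancel₀ _ ha.ne', div_mul_cancel₀ _ hb.ne', ← add_mul, barycentric, one_mul]
  · have power {x : ℝ} (hx : 0 ≤ x) : (x ^ (β / α)) ^ α = x ^ β := by
      rw [← rpow_mul hx, div_mul_cancel₀ _ hα₀.ne']
    have hβα : 1 ≤ β / α := (one_le_div₀ hα₀).2 hβ
    have convex : k ^ (β / α) ≤ (1 - μ) * x ^ (β / α) + μ * y ^ (β / α) :=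
      (rpow_le_rpow hk hkxy (zero_le_one.trans hβα)).trans
        ((convexOn_rpow hβα).2 hx hy hμ'.le hμ₀.le (sub_add_cancel 1 μ))
    rw [← power hk, ← power hx, ← power hy]
    exact jensen _ _ _ (by positivity) (by positivity) (by positivity) convex

end TangentWeights

section GaussianJensen

variable {h R R' : ℝ → ℝ}

/-- The Gaussian density ratio of the change of variables `R`: the pull-back of `h γ` has this
density with respect to `γ`. -/
noncomputable def pullbackDensity (h R R' : ℝ → ℝ) (z : ℝ) : ℝ := h (R z) * φ (R z) * R' z / φ z

theorem pullbackDensity_pos {z : ℝ} (hh : 0 < h (R z)) (hR' : 0 < R' z) :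
    0 < pullbackDensity h R R' z :=
  div_pos (mul_pos (mul_pos hh (stdGaussianPDF_pos _)) hR') (stdGaussianPDF_pos z)

/-- The transport cost density of a map `R` with derivative `R'`: the potential `-log h` of `h γ`
along `R`, the quadratic displacement cost and the logarithmic cost of the Jacobian. -/
noncomputable def transportEnergy (h R R' : ℝ → ℝ) (z : ℝ) : ℝ :=
  -log (h (R z)) + (z - R z) ^ 2 / 2 + logDeficit (R' z)

theorem neg_log_pullbackDensity {z : ℝ} (hh : 0 < h (R z)) (hR' : 0 < R' z) :
    -log (pullbackDensity h R R' z) = transportEnergy h R R' z - displacementDivergence R R' z := by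
  have hφ := stdGaussianPDF_pos
  rw [pullbackDensity, log_div (mul_pos (mul_pos hh (hφ _)) hR').ne' (hφ z).ne',
    log_mul (mul_pos hh (hφ _)).ne' hR'.ne', log_mul hh.ne' (hφ _).ne', log_stdGaussianPDF,
    log_stdGaussianPDF, transportEnergy, logDeficit, displacementDivergence]
  ring

theorem IsContractiveTransport.transportEnergy_eq {f T T' : ℝ → ℝ}
    (hT : IsContractiveTransport f T T') (z : ℝ) :
    transportEnergy f T T' z = -log (∫ x, f x ∂γ) + displacementDivergence T T' z := by
  have mass : pullbackDensity f T T' z = ∫ x, f x ∂γ := by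
    rw [pullbackDensity, hT.monge_ampere, mul_div_cancel_right₀ _ (stdGaussianPDF_pos z).ne']
  rw [← mass, neg_log_pullbackDensity (hT.map_pos z) (hT.deriv_pos z), sub_add_cancel]

theorem integrable_pullbackDensity_and_integral_le (hh : Integrable h γ) (nonneg : ∀ x, 0 ≤ h x)
    (deriv : ∀ z, HasDerivAt R (R' z) z) (deriv_nonneg : ∀ z, 0 ≤ R' z) :
    Integrable (pullbackDensity h R R') γ ∧ ∫ z, pullbackDensity h R R' z ∂γ ≤ ∫ x, h x ∂γ := by
  have hhφ := integrable_stdGaussian_iff.1 hh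
  have mono : MonotoneOn R univ :=
    (monotone_of_hasDerivAt_nonneg deriv deriv_nonneg).monotoneOn univ
  have pullback :
      (fun z => pullbackDensity h R R' z * φ z) = fun z => R' z • (h (R z) * φ (R z)) := by
    ext z
    rw [pullbackDensity, div_mul_cancel₀ _ (stdGaussianPDF_pos z).ne', smul_eq_mul, mul_comm]
  rw [integrable_stdGaussian_iff, integral_stdGaussian, integral_stdGaussian, pullback]
  constructor
  · rw [← integrableOn_univ, ← integrableOn_image_iff_integrableOn_deriv_smul_of_monotoneOn
      MeasurableSet.univ (fun z _ => (deriv z).hasDerivWithinAt) mono (fun x => h x * φ x)]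
    exact hhφ.integrableOn
  · rw [← setIntegral_univ, ← integral_image_eq_integral_deriv_smul_of_monotoneOn
      MeasurableSet.univ (fun z _ => (deriv z).hasDerivWithinAt) mono (fun x => h x * φ x)]
    exact setIntegral_le_integral hhφ
      (ae_of_all _ fun x => mul_nonneg (nonneg x) (stdGaussianPDF_pos x).le)

theorem exp_neg_le_integral_of_neg_log_pullbackDensity_le {D : ℝ → ℝ} {c : ℝ} (hh : Integrable h γ)
    (nonneg : ∀ x, 0 ≤ h x) (deriv : ∀ z, HasDerivAt R (R' z) z) (deriv_pos : ∀ z, 0 < R' z)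
    (map_pos : ∀ z, 0 < h (R z)) (hD : Integrable D γ) (hD₀ : ∫ z, D z ∂γ = 0)
    (bound : ∀ z, -log (pullbackDensity h R R' z) ≤ c + D z) : exp (-c) ≤ ∫ x, h x ∂γ := by
  obtain ⟨integrable, integral_le⟩ :=
    integrable_pullbackDensity_and_integral_le hh nonneg deriv fun z => (deriv_pos z).le
  have pointwise (z : ℝ) : exp (-c) * (1 - D z) ≤ pullbackDensity h R R' z :=
    calc exp (-c) * (1 - D z) ≤ exp (-c) * exp (-D z) := by
          gcongr
          linarith [add_one_le_exp (-D z)]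
      _ = exp (-c - D z) := by rw [← exp_add, sub_eq_add_neg]
      _ ≤ pullbackDensity h R R' z := by
          rw [← le_log_iff_exp_le (pullbackDensity_pos (map_pos z) (deriv_pos z))]
          linarith [bound z]
  calc exp (-c) = ∫ z, exp (-c) * (1 - D z) ∂γ := by
        rw [integral_const_mul, integral_sub (integrable_const 1) hD, hD₀]
        simp
    _ ≤ ∫ z, pullbackDensity h R R' z ∂γ :=
        integral_mono (((integrable_const 1).sub hD).const_mul _) integrable pointwise
    _ ≤ ∫ x, h x ∂γ := integral_le

end GaussianJensen

section RootLogConcave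

/-- The convex counterpart `(-log s) ^ (1 / α)` of `-L_α s`, for `s > 0`. -/
noncomputable def negLogRoot (α s : ℝ) : ℝ := (-log s) ^ (1 / α)

section NegLogRoot

variable {α s : ℝ}

theorem neg_log_nonneg (hs : s ∈ Icc 0 1) : 0 ≤ -log s := neg_nonneg.2 (log_nonpos hs.1 hs.2)

theorem negLogRoot_nonneg (hs : s ∈ Icc 0 1) : 0 ≤ negLogRoot α s :=
  rpow_nonneg (neg_log_nonneg hs) _

theorem negLogRoot_rpow (hα : α ≠ 0) (hs : s ∈ Icc 0 1) : negLogRoot α s ^ α = -log s := by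
  rw [negLogRoot, one_div, rpow_inv_rpow (neg_log_nonneg hs) hα]

theorem negLogRoot_le_iff {c : ℝ} (hα : 0 < α) (hs : s ∈ Icc 0 1) (pos : 0 < s) (hc : 0 ≤ c) :
    negLogRoot α s ≤ c ↔ exp (-c ^ α) ≤ s := by
  rw [negLogRoot, one_div, rpow_inv_le_iff_of_pos (neg_log_nonneg hs) hc hα, neg_le,
    le_log_iff_exp_le pos]

end NegLogRoot

variable {E : Type*} [AddCommGroup E] [Module ℝ E]

/-- A function is root-logconcave with exponent `α` if `L_α ∘ u` is concave, where `L_α` takes the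
value `-∞` off the set `{0 < u}`. -/
def RootLogConcave (α : ℝ) (u : E → ℝ) : Prop :=
  ConvexOn ℝ {x | 0 < u x} fun x => negLogRoot α (u x)

variable {α : ℝ} {u : E → ℝ}

theorem RootLogConcave.convexOn_neg_log (hα : 1 ≤ α) (hu : RootLogConcave α u)
    (hu₁ : ∀ x, u x ∈ Icc 0 1) : ConvexOn ℝ {x | 0 < u x} fun x => -log (u x) := by
  have hα₀ : 0 < α := one_pos.trans_le hα
  refine ⟨hu.1, fun x hx y hy a b ha hb hab => ?_⟩
  have root_nonneg (x : E) : 0 ≤ negLogRoot α (u x) := negLogRoot_nonneg (hu₁ x)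
  simp only [← negLogRoot_rpow hα₀.ne' (hu₁ _)]
  exact (rpow_le_rpow (root_nonneg _) (hu.2 hx hy ha hb hab) hα₀.le).trans
    ((convexOn_rpow hα).2 (root_nonneg x) (root_nonneg y) ha hb hab)

theorem RootLogConcave.comp_affineMap {F : Type*} [AddCommGroup F] [Module ℝ F]
    (hu : RootLogConcave α u) (g : F →ᵃ[ℝ] E) : RootLogConcave α (u ∘ g) :=
  ConvexOn.comp_affineMap g hu

end RootLogConcave

section ThreeFunctions

variable {α μ : ℝ} {f g h : ℝ → ℝ}

theorem transportEnergy_interpolation_le {S S' T T' : ℝ → ℝ} {P Q z : ℝ} (hα : 0 < α) (hα₂ : α ≤ 2)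
    (hμ₀ : 0 ≤ μ) (hμ₁ : μ ≤ 1) (hf : f (S z) ∈ Icc 0 1) (hg : g (T z) ∈ Icc 0 1)
    (hh : h ((1 - μ) * S z + μ * T z) ∈ Icc 0 1) (hS' : S' z ∈ Ioc 0 1) (hT' : T' z ∈ Ioc 0 1)
    (weights : ∀ β, α ≤ β → ∀ k x y : ℝ, 0 ≤ k → 0 ≤ x → 0 ≤ y → k ≤ (1 - μ) * x + μ * y →
      k ^ β ≤ P * x ^ β + Q * y ^ β)
    (root_le : negLogRoot α (h ((1 - μ) * S z + μ * T z)) ≤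
      (1 - μ) * negLogRoot α (f (S z)) + μ * negLogRoot α (g (T z))) :
    transportEnergy h (fun z => (1 - μ) * S z + μ * T z) (fun z => (1 - μ) * S' z + μ * T' z) z ≤
      P * transportEnergy f S S' z + Q * transportEnergy g T T' z := by
  have hμ' : 0 ≤ 1 - μ := sub_nonneg.2 hμ₁
  set r := (1 - μ) * S z + μ * T z with hr
  set r' := (1 - μ) * S' z + μ * T' z with hr'
  have hr'₁ : r' ∈ Ioc 0 1 := convex_Ioc 0 1 hS' hT' hμ' hμ₀ (sub_add_cancel 1 μ)
  have potential : -log (h r) ≤ P * -log (f (S z)) + Q * -log (g (T z)) := by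
    simp only [← negLogRoot_rpow hα.ne' hf, ← negLogRoot_rpow hα.ne' hg,
      ← negLogRoot_rpow hα.ne' hh]
    exact weights α le_rfl _ _ _ (negLogRoot_nonneg hh) (negLogRoot_nonneg hf)
      (negLogRoot_nonneg hg) root_le
  have displacement : (z - r) ^ 2 ≤ P * (z - S z) ^ 2 + Q * (z - T z) ^ 2 := by
    have triangle : |z - r| ≤ (1 - μ) * |z - S z| + μ * |z - T z| :=
      calc |z - r| = |(1 - μ) * (z - S z) + μ * (z - T z)| := by rw [hr]; congr 1; ring
        _ ≤ |(1 - μ) * (z - S z)| + |μ * (z - T z)| := abs_add_le _ _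
        _ = (1 - μ) * |z - S z| + μ * |z - T z| := by
            rw [abs_mul, abs_mul, abs_of_nonneg hμ', abs_of_nonneg hμ₀]
    simpa only [rpow_two, sq_abs] using
      weights 2 hα₂ _ _ _ (abs_nonneg _) (abs_nonneg _) (abs_nonneg _) triangle
  have jacobian : logDeficit r' ≤ P * logDeficit (S' z) + Q * logDeficit (T' z) := by
    have convex : √(logDeficit r') ≤ (1 - μ) * √(logDeficit (S' z)) + μ * √(logDeficit (T' z)) :=
      convexOn_sqrt_logDeficit.2 hS' hT' hμ' hμ₀ (sub_add_cancel 1 μ)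
    simpa only [rpow_two, sq_sqrt (logDeficit_nonneg hS'), sq_sqrt (logDeficit_nonneg hT'),
      sq_sqrt (logDeficit_nonneg hr'₁)] using
      weights 2 hα₂ _ _ _ (sqrt_nonneg _) (sqrt_nonneg _) (sqrt_nonneg _) convex
  simp only [transportEnergy, ← hr, ← hr']
  linarith

theorem exp_neg_rpow_le_integral_of_interpolation {a b : ℝ} (hα₁ : 1 ≤ α) (hα₂ : α ≤ 2)
    (hμ₀ : 0 < μ) (hμ₁ : μ < 1) (ha : 0 < a) (hb : 0 < b) (fγ : Integrable f γ)
    (f₁ : ∀ x, f x ∈ Icc 0 1) (hf : RootLogConcave α f) (gγ : Integrable g γ)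
    (g₁ : ∀ x, g x ∈ Icc 0 1) (hg : RootLogConcave α g) (hγ : Integrable h γ)
    (h₁ : ∀ x, h x ∈ Icc 0 1)
    (interpolation : ∀ x y, 0 < f x → 0 < g y → 0 < h ((1 - μ) * x + μ * y) ∧
      negLogRoot α (h ((1 - μ) * x + μ * y)) ≤
        (1 - μ) * negLogRoot α (f x) + μ * negLogRoot α (g y))
    (f_int : exp (-a ^ α) ≤ ∫ x, f x ∂γ) (g_int : exp (-b ^ α) ≤ ∫ x, g x ∂γ) :
    exp (-((1 - μ) * a + μ * b) ^ α) ≤ ∫ x, h x ∂γ := by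
  have hμ' : 0 < 1 - μ := sub_pos.2 hμ₁
  have f_pos : 0 < ∫ x, f x ∂γ := (exp_pos _).trans_le f_int
  have g_pos : 0 < ∫ x, g x ∂γ := (exp_pos _).trans_le g_int
  obtain ⟨S, S', hS⟩ := exists_isContractiveTransport fγ (fun x => (f₁ x).1)
    (hf.convexOn_neg_log hα₁ f₁) f_pos
  obtain ⟨T, T', hT⟩ := exists_isContractiveTransport gγ (fun x => (g₁ x).1)
    (hg.convexOn_neg_log hα₁ g₁) g_pos
  obtain ⟨P, Q, hP, hQ, hPQ, weights⟩ := exists_tangent_weights hα₁ hμ₀ hμ₁ ha hb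
  obtain ⟨δS_integrable, δS_integral⟩ :=
    hS.integrable_and_integral_displacementDivergence_eq_zero
  obtain ⟨δT_integrable, δT_integral⟩ :=
    hT.integrable_and_integral_displacementDivergence_eq_zero
  have deriv_pos (z : ℝ) : 0 < (1 - μ) * S' z + μ * T' z :=
    add_pos (mul_pos hμ' (hS.deriv_pos z)) (mul_pos hμ₀ (hT.deriv_pos z))
  refine exp_neg_le_integral_of_neg_log_pullbackDensity_le
    (R := fun z => (1 - μ) * S z + μ * T z) (R' := fun z => (1 - μ) * S' z + μ * T' z)
    (D := fun z => (P - (1 - μ)) * displacementDivergence S S' z +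
      (Q - μ) * displacementDivergence T T' z) hγ (fun x => (h₁ x).1)
    (fun z => ((hS.hasDerivAt z).const_mul _).add ((hT.hasDerivAt z).const_mul _)) deriv_pos
    (fun z => (interpolation _ _ (hS.map_pos z) (hT.map_pos z)).1)
    ((δS_integrable.const_mul _).add (δT_integrable.const_mul _)) ?_ fun z => ?_
  · rw [integral_add (δS_integrable.const_mul _) (δT_integrable.const_mul _), integral_const_mul,
      integral_const_mul, δS_integral, δT_integral, mul_zero, mul_zero, add_zero]
  · obtain ⟨map_pos, root_le⟩ := interpolation _ _ (hS.map_pos z) (hT.map_pos z)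
    have energy := transportEnergy_interpolation_le (one_pos.trans_le hα₁) hα₂ hμ₀.le hμ₁.le
      (f₁ _) (g₁ _) (h₁ _) ⟨hS.deriv_pos z, hS.deriv_le_one z⟩ ⟨hT.deriv_pos z, hT.deriv_le_one z⟩
      weights root_le
    rw [hS.transportEnergy_eq, hT.transportEnergy_eq] at energy
    have P_bound := mul_le_mul_of_nonneg_left (neg_le.2 ((le_log_iff_exp_le f_pos).2 f_int)) hP
    have Q_bound := mul_le_mul_of_nonneg_left (neg_le.2 ((le_log_iff_exp_le g_pos).2 g_int)) hQ
    rw [neg_log_pullbackDensity (R := fun z => (1 - μ) * S z + μ * T z)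
      (R' := fun z => (1 - μ) * S' z + μ * T' z) map_pos (deriv_pos z),
      displacementDivergence_interpolation]
    linarith

end ThreeFunctions

section GaussianIntegration

variable {α : ℝ}

theorem integral_mem_Icc_zero_one {Ω : Type*} [MeasurableSpace Ω] {P : Measure Ω}
    [IsProbabilityMeasure P] {u : Ω → ℝ} (hu : ∀ ω, u ω ∈ Icc 0 1) : ∫ ω, u ω ∂P ∈ Icc 0 1 :=
  ⟨integral_nonneg fun ω => (hu ω).1, by
    simpa using integral_mono_of_nonneg (ae_of_all P fun ω => (hu ω).1) (integrable_const 1)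
      (ae_of_all P fun ω => (hu ω).2)⟩

theorem negLogRoot_integral_le_of_interpolation {μ : ℝ} {f g h : ℝ → ℝ} (hα₁ : 1 ≤ α) (hα₂ : α ≤ 2)
    (hμ₀ : 0 < μ) (hμ₁ : μ < 1) (fγ : Integrable f γ) (f₁ : ∀ x, f x ∈ Icc 0 1)
    (hf : RootLogConcave α f) (gγ : Integrable g γ) (g₁ : ∀ x, g x ∈ Icc 0 1)
    (hg : RootLogConcave α g) (hγ : Integrable h γ) (h₁ : ∀ x, h x ∈ Icc 0 1)
    (interpolation : ∀ x y, 0 < f x → 0 < g y → 0 < h ((1 - μ) * x + μ * y) ∧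
      negLogRoot α (h ((1 - μ) * x + μ * y)) ≤
        (1 - μ) * negLogRoot α (f x) + μ * negLogRoot α (g y))
    (f_pos : 0 < ∫ x, f x ∂γ) (g_pos : 0 < ∫ x, g x ∂γ) :
    0 < ∫ x, h x ∂γ ∧ negLogRoot α (∫ x, h x ∂γ) ≤
      (1 - μ) * negLogRoot α (∫ x, f x ∂γ) + μ * negLogRoot α (∫ x, g x ∂γ) := by
  have hα₀ : 0 < α := one_pos.trans_le hα₁
  have : 0 ≤ 1 - μ := sub_nonneg.2 hμ₁.le
  set a := negLogRoot α (∫ x, f x ∂γ)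
  set b := negLogRoot α (∫ x, g x ∂γ)
  have ha : 0 ≤ a := negLogRoot_nonneg (integral_mem_Icc_zero_one f₁)
  have hb : 0 ≤ b := negLogRoot_nonneg (integral_mem_Icc_zero_one g₁)
  have lower {ε : ℝ} (hε : 0 < ε) :
      exp (-((1 - μ) * (a + ε) + μ * (b + ε)) ^ α) ≤ ∫ x, h x ∂γ :=
    exp_neg_rpow_le_integral_of_interpolation hα₁ hα₂ hμ₀ hμ₁ (by positivity) (by positivity)
      fγ f₁ hf gγ g₁ hg hγ h₁ interpolation
      ((negLogRoot_le_iff hα₀ (integral_mem_Icc_zero_one f₁) f_pos (by positivity)).1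
        (le_add_of_nonneg_right hε.le))
      ((negLogRoot_le_iff hα₀ (integral_mem_Icc_zero_one g₁) g_pos (by positivity)).1
        (le_add_of_nonneg_right hε.le))
  have h_pos : 0 < ∫ x, h x ∂γ := (exp_pos _).trans_le (lower one_pos)
  refine ⟨h_pos, le_of_forall_pos_le_add fun ε hε => ?_⟩
  have upper := (negLogRoot_le_iff hα₀ (integral_mem_Icc_zero_one h₁) h_pos
    (by positivity)).2 (lower hε)
  linarith

variable {E : Type*} [AddCommGroup E] [Module ℝ E] [MeasurableSpace E]

/-- Averaging over the translates by a `ν`-distributed vector maps measurable root-logconcave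
functions with values in `[0, 1]` to root-logconcave functions. -/
def PreservesRootLogConcavity (α : ℝ) (ν : Measure E) : Prop :=
  ∀ u : E → ℝ, Measurable u → (∀ x, u x ∈ Icc 0 1) → RootLogConcave α u →
    RootLogConcave α fun x => ∫ y, u (x + y) ∂ν

theorem preservesRootLogConcavity_map_smul [MeasurableAdd E] [MeasurableSMul ℝ E]
    (hα₁ : 1 ≤ α) (hα₂ : α ≤ 2) (e : E) :
    PreservesRootLogConcavity α (Measure.map (fun r : ℝ => r • e) γ) := by
  intro u u_meas u₁ hu
  have smul_meas : Measurable fun r : ℝ => r • e := measurable_id.smul_const e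
  have line_meas (x : E) : Measurable fun r : ℝ => u (x + r • e) :=
    u_meas.comp (smul_meas.const_add x)
  have line_integrable (x : E) : Integrable (fun r : ℝ => u (x + r • e)) γ :=
    .of_mem_Icc 0 1 (line_meas x).aemeasurable (ae_of_all _ fun r => u₁ _)
  have line_concave (x : E) : RootLogConcave α fun r : ℝ => u (x + r • e) := by
    simpa [Function.comp_def, AffineMap.lineMap_apply, add_comm] using
      hu.comp_affineMap (AffineMap.lineMap x (x + e))
  have average (x : E) :
      ∫ y, u (x + y) ∂Measure.map (fun r : ℝ => r • e) γ = ∫ r, u (x + r • e) ∂γ :=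
    integral_map smul_meas.aemeasurable
      (u_meas.comp (measurable_const_add x)).aestronglyMeasurable
  simp only [average]
  have key {x y : E} {μ : ℝ} (hμ₀ : 0 < μ) (hμ₁ : μ < 1) :=
    negLogRoot_integral_le_of_interpolation hα₁ hα₂ hμ₀ hμ₁
      (line_integrable x) (fun _ => u₁ _) (line_concave x) (line_integrable y) (fun _ => u₁ _)
      (line_concave y) (line_integrable ((1 - μ) • x + μ • y)) (fun _ => u₁ _) fun r s hr hs => by
        rw [show (1 - μ) • x + μ • y + ((1 - μ) * r + μ * s) • e =
          (1 - μ) • (x + r • e) + μ • (y + s • e) by module]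
        exact ⟨hu.1 hr hs (sub_nonneg.2 hμ₁.le) hμ₀.le (sub_add_cancel 1 μ),
          hu.2 hr hs (sub_nonneg.2 hμ₁.le) hμ₀.le (sub_add_cancel 1 μ)⟩
  rw [RootLogConcave, convexOn_iff_forall_pos, convex_iff_forall_pos]
  constructor
  · rintro x hx y hy a b ha hb hab
    obtain rfl : a = 1 - b := eq_sub_of_add_eq hab
    exact (key hb (sub_pos.1 ha) hx hy).1
  · rintro x hx y hy a b ha hb hab
    obtain rfl : a = 1 - b := eq_sub_of_add_eq hab
    exact (key hb (sub_pos.1 ha) hx hy).2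

theorem preservesRootLogConcavity_dirac_zero [MeasurableAdd E] (α : ℝ) :
    PreservesRootLogConcavity α (Measure.dirac (0 : E)) := fun u u_meas _ hu => by
  have average (x : E) : ∫ y, u (x + y) ∂Measure.dirac 0 = u x := by
    have meas : Measurable fun y => u (x + y) := u_meas.comp (measurable_const_add x)
    rw [integral_dirac' _ _ meas.stronglyMeasurable, add_zero]
  simpa only [average] using hu

theorem PreservesRootLogConcavity.conv [MeasurableAdd₂ E] {ν ρ : Measure E}
    [IsProbabilityMeasure ν] [IsProbabilityMeasure ρ] (hν : PreservesRootLogConcavity α ν)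
    (hρ : PreservesRootLogConcavity α ρ) : PreservesRootLogConcavity α (ν ∗ ρ) := by
  intro u u_meas u₁ hu
  have inner_meas : Measurable fun x => ∫ y, u (x + y) ∂ρ := by
    have joint : Measurable (Function.uncurry fun x y => u (x + y)) := u_meas.comp measurable_add
    exact joint.stronglyMeasurable.integral_prod_right.measurable
  have average (x : E) : ∫ y, u (x + y) ∂(ν ∗ ρ) = ∫ y, ∫ z, u (x + y + z) ∂ρ ∂ν := by
    have meas : Measurable fun y => u (x + y) := u_meas.comp (measurable_const_add x)
    rw [integral_conv (.of_mem_Icc 0 1 meas.aemeasurable (ae_of_all _ fun y => u₁ _))]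
    simp only [add_assoc]
  simp only [average]
  exact hν _ inner_meas (fun x => integral_mem_Icc_zero_one fun y => u₁ _) (hρ u u_meas u₁ hu)

theorem preservesRootLogConcavity_map_sum_of_iIndepFun [MeasurableAdd₂ E] {Ω ι : Type*}
    [MeasurableSpace Ω] {P : Measure Ω} {X : ι → Ω → E} (indep : iIndepFun X P)
    (meas : ∀ i, Measurable (X i)) (hX : ∀ i, PreservesRootLogConcavity α (P.map (X i)))
    (s : Finset ι) : PreservesRootLogConcavity α (P.map (∑ i ∈ s, X i)) := by
  classical
  have : IsProbabilityMeasure P := indep.isProbabilityMeasure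
  induction s using Finset.induction_on with
  | empty =>
    rw [Finset.sum_empty, show (0 : Ω → E) = fun _ => 0 from rfl, Measure.map_const, measure_univ,
      one_smul]
    exact preservesRootLogConcavity_dirac_zero α
  | insert i s hi ih =>
    have sum_meas : Measurable (∑ j ∈ s, X j) :=
      Finset.sum_induction X Measurable (fun _ _ => .add) measurable_zero fun j _ => meas j
    have := Measure.isProbabilityMeasure_map (μ := P) (meas i).aemeasurable
    have := Measure.isProbabilityMeasure_map (μ := P) sum_meas.aemeasurable
    have indep_sum := (indep.indepFun_finsetSum_of_notMem meas hi).symm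
    rw [Finset.sum_insert hi, indep_sum.map_add_eq_map_conv_map (meas i) sum_meas]
    exact (hX i).conv ih

theorem preservesRootLogConcavity_map_sum_smul [MeasurableAdd₂ E] [MeasurableSMul ℝ E] {ι : Type*}
    [Fintype ι] (hα₁ : 1 ≤ α) (hα₂ : α ≤ 2) (v : ι → E) :
    PreservesRootLogConcavity α ((Measure.pi fun _ : ι => γ).map fun z => ∑ i, z i • v i) := by
  have indep := iIndepFun_pi (μ := fun _ : ι => γ) (X := fun i r => r • v i)
    fun i => (measurable_id.smul_const (v i)).aemeasurable
  have sum := preservesRootLogConcavity_map_sum_of_iIndepFun (α := α) indep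
    (fun i => (measurable_pi_apply i).smul_const (v i)) (fun i => ?_) Finset.univ
  · convert sum using 3 with z
    simp
  · have marginal : (Measure.pi fun _ : ι => γ).map (fun z => z i • v i) =
        Measure.map (fun r : ℝ => r • v i) γ := by
      have eval := (measurePreserving_eval (fun _ : ι => γ) i).map_eq
      conv_rhs => rw [← eval]
      exact (Measure.map_map (measurable_id.smul_const (v i)) (measurable_pi_apply i)).symm
    rw [marginal]
    exact preservesRootLogConcavity_map_smul hα₁ hα₂ (v i)

end GaussianIntegration

section HeatKernel

variable {N : ℕ} {t : ℝ}

/-- The law of the Brownian displacement: `heatSol` at time `t` averages over the translates by a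
random vector with this distribution. -/
noncomputable def heatMeasure (N : ℕ) (t : ℝ) : Measure (EuclideanSpace ℝ (Fin N)) :=
  volume.withDensity fun y => ENNReal.ofReal (gauss N y t)

theorem gauss_nonneg (ht : 0 < t) (y : EuclideanSpace ℝ (Fin N)) : 0 ≤ gauss N y t := by
  unfold gauss
  positivity

theorem gauss_eq (y : EuclideanSpace ℝ (Fin N)) :
    gauss N y t = (4 * π * t) ^ (-(N : ℝ) / 2) * exp (-(1 / (4 * t)) * ‖y‖ ^ 2) := by
  rw [gauss]
  congr 2
  ring

theorem measurable_gauss : Measurable fun y => gauss N y t := by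
  unfold gauss
  fun_prop

theorem integrable_gauss (ht : 0 < t) : Integrable fun y => gauss N y t := by
  simp only [gauss_eq]
  refine (Integrable.of_integral_ne_zero ?_).const_mul _
  rw [GaussianFourier.integral_rexp_neg_mul_sq_norm (by positivity)]
  positivity

theorem integral_heatMeasure {F : Type*} [NormedAddCommGroup F] [NormedSpace ℝ F] (ht : 0 < t)
    (u : EuclideanSpace ℝ (Fin N) → F) :
    ∫ y, u y ∂heatMeasure N t = ∫ y, gauss N y t • u y := by
  rw [heatMeasure, integral_withDensity_eq_integral_toReal_smul
    measurable_gauss.ennreal_ofReal (ae_of_all _ fun _ => ENNReal.ofReal_lt_top)]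
  simp only [ENNReal.toReal_ofReal (gauss_nonneg ht _)]

theorem charFun_heatMeasure (ht : 0 < t) (ξ : EuclideanSpace ℝ (Fin N)) :
    charFun (heatMeasure N t) ξ = Complex.exp (-(t * ‖ξ‖ ^ 2 : ℝ)) := by
  have hb : 0 < ((1 / (4 * t) : ℝ) : ℂ).re := by
    rw [Complex.ofReal_re]
    positivity
  have fourier := GaussianFourier.integral_cexp_neg_mul_sq_norm_add hb Complex.I ξ
  have density (y : EuclideanSpace ℝ (Fin N)) :
      gauss N y t • Complex.exp (inner ℝ y ξ * Complex.I) =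
        ((4 * π * t) ^ (-(N : ℝ) / 2) : ℝ) *
          Complex.exp (-(1 / (4 * t) : ℝ) * ‖y‖ ^ 2 + Complex.I * inner ℝ ξ y) := by
    rw [gauss_eq, Complex.real_smul, Complex.exp_add, real_inner_comm, mul_comm Complex.I]
    push_cast
    ring
  have normalization : (4 * π * t) ^ (-(N : ℝ) / 2) * (π / (1 / (4 * t))) ^ ((N : ℝ) / 2) = 1 := by
    rw [div_div_eq_mul_div, div_one, show π * (4 * t) = 4 * π * t by ring,
      ← rpow_add (by positivity), neg_div, neg_add_cancel, rpow_zero]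
  rw [charFun_apply, integral_heatMeasure ht]
  simp only [density]
  rw [integral_const_mul, fourier, finrank_euclideanSpace_fin, ← mul_assoc,
    show ((π : ℂ) / (1 / (4 * t) : ℝ)) ^ ((N : ℂ) / 2) =
      ((π / (1 / (4 * t))) ^ ((N : ℝ) / 2) : ℝ) by
        rw [Complex.ofReal_cpow (by positivity)]; push_cast; rfl,
    ← Complex.ofReal_mul, normalization, Complex.ofReal_one, one_mul, Complex.I_sq]
  congr 1
  push_cast
  field_simp

theorem heatMeasure_eq_map_stdGaussian (ht : 0 < t) :
    heatMeasure N t = (stdGaussian (EuclideanSpace ℝ (Fin N))).map fun y => √(2 * t) • y := by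
  have : IsFiniteMeasure (heatMeasure N t) :=
    isFiniteMeasure_withDensity_ofReal (integrable_gauss ht).2
  have exponent (ξ : EuclideanSpace ℝ (Fin N)) : ‖√(2 * t) • ξ‖ ^ 2 / 2 = t * ‖ξ‖ ^ 2 := by
    rw [norm_smul, mul_pow, norm_eq_abs, sq_abs, sq_sqrt (by positivity)]
    ring
  refine Measure.ext_of_charFun (funext fun ξ => ?_)
  rw [charFun_heatMeasure ht, charFun_map_smul, charFun_stdGaussian, ← exponent]
  push_cast
  rw [neg_div]

theorem heatSol_eq_integral_heatMeasure (ht : 0 < t) (u : EuclideanSpace ℝ (Fin N) → ℝ)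
    (x : EuclideanSpace ℝ (Fin N)) : heatSol N u t x = ∫ y, u (x + y) ∂heatMeasure N t :=
  calc heatSol N u t x = ∫ y, gauss N (x - (x + y)) t * u (x + y) :=
        (integral_add_left_eq_self (fun y => gauss N (x - y) t * u y) x).symm
    _ = ∫ y, gauss N y t • u (x + y) := by simp [gauss]
    _ = ∫ y, u (x + y) ∂heatMeasure N t := (integral_heatMeasure ht _).symm

end HeatKernel

theorem preservesRootLogConcavity_heatMeasure {N : ℕ} {α t : ℝ} (hα₁ : 1 ≤ α) (hα₂ : α ≤ 2)
    (ht : 0 < t) : PreservesRootLogConcavity α (heatMeasure N t) := by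
  convert preservesRootLogConcavity_map_sum_smul hα₁ hα₂
    fun i => √(2 * t) • stdOrthonormalBasis ℝ (EuclideanSpace ℝ (Fin N)) i using 1
  rw [heatMeasure_eq_map_stdGaussian ht, stdGaussian, Measure.map_map (by fun_prop) (by fun_prop)]
  congr 1 with z
  simp only [Function.comp_apply, Finset.smul_sum, smul_comm (√(2 * t))]

section ExtendedRealConcavity

variable {E : Type*} [AddCommGroup E] [Module ℝ E] {α : ℝ} {u : E → ℝ}

theorem Lfun_of_pos {s : ℝ} (hs : 0 < s) : Lfun α s = (-negLogRoot α s : ℝ) := if_pos hs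

theorem Lfun_of_nonpos {s : ℝ} (hs : s ≤ 0) : Lfun α s = ⊥ := if_neg hs.not_gt

theorem segment_Lfun_le_iff {r s w μ : ℝ} (hr : 0 < r) (hs : 0 < s) :
    ((1 - μ : ℝ) : EReal) * Lfun α r + (μ : EReal) * Lfun α s ≤ Lfun α w ↔
      0 < w ∧ negLogRoot α w ≤ (1 - μ) * negLogRoot α r + μ * negLogRoot α s := by
  rw [Lfun_of_pos hr, Lfun_of_pos hs]
  rcases lt_or_ge 0 w with hw | hw
  · rw [Lfun_of_pos hw]
    norm_cast
    rw [and_iff_right hw]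
    constructor <;> intro h <;> linarith
  · rw [Lfun_of_nonpos hw]
    exact iff_of_false (by rw [le_bot_iff]; exact_mod_cast EReal.coe_ne_bot _)
      fun h => hw.not_gt h.1

theorem erealConcaveOn_Lfun_iff :
    ERealConcaveOn (fun x => Lfun α (u x)) ↔ RootLogConcave α u := by
  constructor
  · intro h
    have segment {x y : E} {a b : ℝ} (hx : 0 < u x) (hy : 0 < u y) (ha : 0 ≤ a) (hb : 0 ≤ b)
        (hab : a + b = 1) : 0 < u (a • x + b • y) ∧
          negLogRoot α (u (a • x + b • y)) ≤ a * negLogRoot α (u x) + b * negLogRoot α (u y) := by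
      obtain rfl : a = 1 - b := eq_sub_of_add_eq hab
      exact (segment_Lfun_le_iff hx hy).1 (h x y b hb (sub_nonneg.1 ha))
    exact ⟨fun x hx y hy a b ha hb hab => (segment hx hy ha hb hab).1,
      fun x hx y hy a b ha hb hab => (segment hx hy ha hb hab).2⟩
  · intro h x y μ hμ₀ hμ₁
    beta_reduce
    rcases hμ₀.eq_or_lt with rfl | hμ₀'
    · simp
    rcases hμ₁.eq_or_lt with rfl | hμ₁'
    · simp
    rcases le_or_gt (u x) 0 with hx | hx
    · rw [Lfun_of_nonpos hx, EReal.coe_mul_bot_of_pos (sub_pos.2 hμ₁'), EReal.bot_add]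
      exact bot_le
    rcases le_or_gt (u y) 0 with hy | hy
    · rw [Lfun_of_nonpos hy, EReal.coe_mul_bot_of_pos hμ₀', EReal.add_bot]
      exact bot_le
    have hμ' := sub_nonneg.2 hμ₁
    exact (segment_Lfun_le_iff hx hy).2 ⟨h.1 hx hy hμ' hμ₀ (sub_add_cancel 1 μ),
      h.2 hx hy hμ' hμ₀ (sub_add_cancel 1 μ)⟩

end ExtendedRealConcavity

/-- The heat flow on `ℝ^N` preserves `α`-logconcavity for `1 ≤ α ≤ 2`. -/
theorem heat_preserves_alpha_logconcavity
    (N : ℕ) (hN : 1 ≤ N) (α : ℝ) (hα₁ : 1 ≤ α) (hα₂ : α ≤ 2)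
    (u₀ : EuclideanSpace ℝ (Fin N) → ℝ) (hmeas : Measurable u₀)
    (h0 : ∀ x, 0 ≤ u₀ x) (hbd : ∃ M : ℝ, ∀ x, u₀ x ≤ M)
    (hconc : AlphaLogConcave α u₀) :
    ∀ t : ℝ, 0 < t → AlphaLogConcave α (heatSol N u₀ t) := by
  intro t ht
  obtain ⟨κ₀, κ₀_pos, hκ₀⟩ := hconc
  obtain ⟨M, hM⟩ := hbd
  have scale_pos : 0 < (|M| + 1)⁻¹ := by positivity
  refine ⟨min κ₀ (|M| + 1)⁻¹, lt_min κ₀_pos scale_pos, fun κ κ_pos hκ => ?_⟩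
  obtain ⟨hκ_left, hκ_right⟩ := le_min_iff.1 hκ
  have unit_valued (x) : κ * u₀ x ∈ Set.Icc 0 1 := by
    refine ⟨mul_nonneg κ_pos.le (h0 x), ?_⟩
    calc κ * u₀ x ≤ (|M| + 1)⁻¹ * (|M| + 1) := by
          gcongr
          · exact h0 x
          · linarith [hM x, le_abs_self M]
      _ = 1 := inv_mul_cancel₀ (by positivity)
  have average (x) : κ * heatSol N u₀ t x = ∫ y, κ * u₀ (x + y) ∂heatMeasure N t := by
    rw [heatSol_eq_integral_heatMeasure ht, integral_const_mul]
  simp only [average, erealConcaveOn_Lfun_iff]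
  exact preservesRootLogConcavity_heatMeasure hα₁ hα₂ ht _ (hmeas.const_mul κ) unit_valued
    (erealConcaveOn_Lfun_iff.1 (hκ₀ κ κ_pos hκ_left))
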